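/- Let σ > 0, r, q ∈ ℝ, K > 0, T > 0, R_B, R_C ∈ [0,1], λ_B, λ_C ≥ 0, and s_F ≥ 0, and set λ' = (1−R_C)λ_C + s_F. Then the function u(s,t) = e^{-λ' t}·C(s,K,t), where C(s,K,t) = s·e^{-q t}·N(d₁(s,K,t)) − K·e^{-r t}·N(d₂(s,K,t)) is the Black–Scholes call price, is nonnegative and satisfies the counterparty credit risk PDE ∂u/∂t − (1/2)σ²s² ∂²u/∂s² − (r−q)s ∂u/∂s + r u = −(1−R_B)λ_B·min(u,0) − ((1−R_C)λ_C + s_F)·max(u,0) at every point (s,t) with s > 0 and 0 < t ≤ T. -/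

import Mathlib

open Real Set

/-- The standard normal cumulative distribution function. -/
noncomputable def stdNormalCDF (x : ℝ) : ℝ :=
  ∫ y in Set.Iic x, (Real.sqrt (2 * Real.pi))⁻¹ * Real.exp (-(y ^ 2) / 2)

/-- d₁(s,K,t) in the Black–Scholes formula. -/
noncomputable def d1 (σ r q s K t : ℝ) : ℝ :=
  (Real.log (s / K) + (r - q + σ ^ 2 / 2) * t) / (σ * Real.sqrt t)

/-- d₂(s,K,t) in the Black–Scholes formula. -/
noncomputable def d2 (σ r q s K t : ℝ) : ℝ :=
  d1 σ r q s K t - σ * Real.sqrt t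

/-- The Black–Scholes European call price. -/
noncomputable def callPrice (σ r q K s t : ℝ) : ℝ :=
  s * Real.exp (-q * t) * stdNormalCDF (d1 σ r q s K t)
    - K * Real.exp (-r * t) * stdNormalCDF (d2 σ r q s K t)

/-- The Black–Scholes European put price. -/
noncomputable def putPrice (σ r q K s t : ℝ) : ℝ :=
  K * Real.exp (-r * t) * stdNormalCDF (-(d2 σ r q s K t))
    - s * Real.exp (-q * t) * stdNormalCDF (-(d1 σ r q s K t))

/-- The standard normal probability density function. -/
noncomputable def stdNormalPDF (x : ℝ) : ℝ :=
  (Real.sqrt (2 * Real.pi))⁻¹ * Real.exp (-(x ^ 2) / 2)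

open MeasureTheory in
theorem aux_integrable : Integrable stdNormalPDF := by
  have h := (integrable_exp_neg_mul_sq (b := 1/2) (by norm_num)).const_mul (Real.sqrt (2 * Real.pi))⁻¹
  refine h.congr (Filter.Eventually.of_forall fun x => ?_)
  simp only [stdNormalPDF]
  congr 2; ring

theorem aux_cont : Continuous stdNormalPDF := by
  unfold stdNormalPDF; fun_prop

open MeasureTheory in
theorem aux_cdf (x : ℝ) : HasDerivAt stdNormalCDF (stdNormalPDF x) x := by
  have h : stdNormalCDF = fun x => stdNormalCDF 0 + ∫ y in (0:ℝ)..x, stdNormalPDF y := by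
    funext x
    have := intervalIntegral.integral_Iic_sub_Iic (μ := volume) (f := stdNormalPDF) (a := 0) (b := x)
      aux_integrable.integrableOn aux_integrable.integrableOn
    rw [← this]
    simp only [stdNormalCDF, stdNormalPDF]
    ring
  rw [h]
  exact (intervalIntegral.integral_hasDerivAt_right (aux_cont.intervalIntegrable _ _)
    (aux_cont.stronglyMeasurableAtFilter _ _) aux_cont.continuousAt).const_add _

/-- key exponent identity -/
theorem aux_key (σ r q K s t : ℝ) (hσ : 0 < σ) (hK : 0 < K) (hs : 0 < s) (ht : 0 < t) :
    K * Real.exp (-r * t) = s * Real.exp (-q * t) *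
      Real.exp (-(d1 σ r q s K t * (σ * √t)) + (σ * √t) ^ 2 / 2) := by
  have h1 : d1 σ r q s K t * (σ * √t) = Real.log (s / K) + (r - q + σ ^ 2 / 2) * t := by
    have : 0 < √t := Real.sqrt_pos.2 ht
    unfold d1; field_simp
  rw [h1, mul_pow, Real.sq_sqrt ht.le, Real.log_div hs.ne' hK.ne', mul_assoc, ← Real.exp_add]
  have : -q * t + (-(Real.log s - Real.log K + (r - q + σ ^ 2 / 2) * t) + σ ^ 2 * t / 2)
    = Real.log K + -r * t - Real.log s := by ring
  rw [this, Real.exp_sub, Real.exp_add, Real.exp_log hs, Real.exp_log hK]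
  field_simp

theorem aux_pdf2 (d a y : ℝ) :
    Real.exp (-(d * a) + a ^ 2 / 2) * stdNormalPDF (y - a) = stdNormalPDF y * Real.exp (a * (y - d)) := by
  unfold stdNormalPDF
  rw [mul_left_comm, mul_assoc, ← Real.exp_add, ← Real.exp_add]
  congr 2; ring

theorem aux_kpdf (σ r q K s t : ℝ) (hσ : 0 < σ) (hK : 0 < K) (hs : 0 < s) (ht : 0 < t) :
    K * Real.exp (-r * t) * stdNormalPDF (d2 σ r q s K t)
      = s * Real.exp (-q * t) * stdNormalPDF (d1 σ r q s K t) := by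
  rw [aux_key σ r q K s t hσ hK hs ht, d2, mul_assoc _ (Real.exp _) (stdNormalPDF _), aux_pdf2]
  simp

open MeasureTheory in
theorem aux_shift (d a : ℝ) : stdNormalCDF (d - a) = ∫ y in Set.Iic d, stdNormalPDF (y - a) := by
  have h := (measurePreserving_sub_right volume a).setIntegral_preimage_emb
    (measurableEmbedding_subRight a) stdNormalPDF (Set.Iic (d - a))
  have h2 : (fun x => x - a) ⁻¹' Set.Iic (d - a) = Set.Iic d := by ext; simp
  rw [h2] at h
  rw [h]; rfl

open MeasureTheory in
theorem aux_nonneg (σ r q K s t : ℝ) (hσ : 0 < σ) (hK : 0 < K) (hs : 0 < s) (ht : 0 < t) :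
    0 ≤ callPrice σ r q K s t := by
  unfold callPrice
  rw [aux_key σ r q K s t hσ hK hs ht, d2, mul_assoc (s * Real.exp (-q * t)) (Real.exp _) (stdNormalCDF _), sub_nonneg]
  have hp : 0 ≤ s * Real.exp (-q * t) := by positivity
  refine mul_le_mul_of_nonneg_left ?_ hp
  rw [aux_shift, ← integral_const_mul]
  refine setIntegral_mono_on (μ := volume) ((aux_integrable.comp_sub_right (σ * √t)).const_mul _).integrableOn
    aux_integrable.integrableOn measurableSet_Iic ?_
  intro y hy
  rw [aux_pdf2]
  have h0 : 0 ≤ stdNormalPDF y := by unfold stdNormalPDF; positivity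
  refine mul_le_of_le_one_right h0 (Real.exp_le_one_iff.2 ?_)
  exact mul_nonpos_of_nonneg_of_nonpos (by positivity) (sub_nonpos.2 hy)

theorem aux_d1s (σ r q K s t : ℝ) (hσ : 0 < σ) (hK : 0 < K) (hs : 0 < s) (ht : 0 < t) :
    HasDerivAt (fun x => d1 σ r q x K t) (1 / (s * (σ * √t))) s := by
  have h := ((((hasDerivAt_id s).div_const K).log (by simp [hs.ne', hK.ne'])).add_const
    ((r - q + σ ^ 2 / 2) * t)).div_const (σ * √t)
  refine h.congr_deriv ?_
  have : 0 < √t := Real.sqrt_pos.2 ht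
  simp only [id]
  field_simp

theorem aux_delta (σ r q K s t : ℝ) (hσ : 0 < σ) (hK : 0 < K) (hs : 0 < s) (ht : 0 < t) :
    HasDerivAt (fun x => callPrice σ r q K x t)
      (Real.exp (-q * t) * stdNormalCDF (d1 σ r q s K t)) s := by
  have h1 := aux_d1s σ r q K s t hσ hK hs ht
  have h2 : HasDerivAt (fun x => d2 σ r q x K t) (1 / (s * (σ * √t))) s := h1.sub_const _
  have h := (((hasDerivAt_id s).mul_const (Real.exp (-q * t))).mul ((aux_cdf _).comp s h1)).sub
    (((aux_cdf _).comp s h2).const_mul (K * Real.exp (-r * t)))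
  refine h.congr_deriv ?_
  have hk := aux_kpdf σ r q K s t hσ hK hs ht
  simp only [id, Function.comp]
  linear_combination (-(1 / (s * (σ * √t)))) * hk

theorem aux_gamma (σ r q K s t : ℝ) (hσ : 0 < σ) (hK : 0 < K) (hs : 0 < s) (ht : 0 < t) :
    HasDerivAt (fun x => Real.exp (-q * t) * stdNormalCDF (d1 σ r q x K t))
      (Real.exp (-q * t) * (stdNormalPDF (d1 σ r q s K t) * (1 / (s * (σ * √t))))) s :=
  ((aux_cdf _).comp s (aux_d1s σ r q K s t hσ hK hs ht)).const_mul _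

theorem aux_theta (σ r q K s t : ℝ) (hσ : 0 < σ) (hK : 0 < K) (hs : 0 < s) (ht : 0 < t) :
    HasDerivAt (fun τ => callPrice σ r q K s τ)
      (-q * s * Real.exp (-q * t) * stdNormalCDF (d1 σ r q s K t)
        + r * K * Real.exp (-r * t) * stdNormalCDF (d2 σ r q s K t)
        + s * Real.exp (-q * t) * stdNormalPDF (d1 σ r q s K t) * (σ * (1 / (2 * √t)))) t := by
  have hq := Real.sqrt_pos.2 ht
  have hsq := (Real.hasDerivAt_sqrt ht.ne').const_mul σ
  obtain ⟨D, h1⟩ : ∃ D, HasDerivAt (fun τ => d1 σ r q s K τ) D t :=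
    ⟨_, (((hasDerivAt_id t).const_mul (r - q + σ ^ 2 / 2)).const_add (Real.log (s / K))).div hsq
      (by positivity)⟩
  have h2 : HasDerivAt (fun τ => d2 σ r q s K τ) (D - σ * (1 / (2 * √t))) t := h1.sub hsq
  have he (c : ℝ) : HasDerivAt (fun τ => Real.exp (c * τ)) (Real.exp (c * t) * (c * 1)) t :=
    ((hasDerivAt_id t).const_mul c).exp
  have h := (((he (-q)).const_mul s).mul ((aux_cdf _).comp t h1)).sub
    (((he (-r)).const_mul K).mul ((aux_cdf _).comp t h2))
  refine h.congr_deriv ?_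
  have hk := aux_kpdf σ r q K s t hσ hK hs ht
  simp only [Function.comp]
  linear_combination (-(D - σ * (1 / (2 * √t)))) * hk

/-- The discounted call u(s,t) = e^{-λ't}·C(s,K,t), with λ' = (1−R_C)λ_C + s_F,
    is nonnegative and satisfies the Burgard–Kjaer counterparty credit risk PDE. -/
theorem discounted_call_solves_xva_pde
    (σ r q K T RB RC lamB lamC sF : ℝ)
    (hσ : 0 < σ) (hK : 0 < K) (hT : 0 < T)
    (hRB : RB ∈ Set.Icc (0 : ℝ) 1) (hRC : RC ∈ Set.Icc (0 : ℝ) 1)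
    (hlamB : 0 ≤ lamB) (hlamC : 0 ≤ lamC) (hsF : 0 ≤ sF) :
    ∀ s t : ℝ, 0 < s → 0 < t → t ≤ T →
      (0 ≤ Real.exp (-((1 - RC) * lamC + sF) * t) * callPrice σ r q K s t) ∧
      (deriv (fun τ => Real.exp (-((1 - RC) * lamC + sF) * τ) * callPrice σ r q K s τ) t
        - (1 / 2) * σ ^ 2 * s ^ 2 *
            deriv (fun x =>
              deriv (fun y =>
                Real.exp (-((1 - RC) * lamC + sF) * t) * callPrice σ r q K y t) x) s
        - (r - q) * s *
            deriv (fun x =>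
              Real.exp (-((1 - RC) * lamC + sF) * t) * callPrice σ r q K x t) s
        + r * (Real.exp (-((1 - RC) * lamC + sF) * t) * callPrice σ r q K s t)
      = -(1 - RB) * lamB *
            min (Real.exp (-((1 - RC) * lamC + sF) * t) * callPrice σ r q K s t) 0
        - ((1 - RC) * lamC + sF) *
            max (Real.exp (-((1 - RC) * lamC + sF) * t) * callPrice σ r q K s t) 0) := by
  intro s t hs ht _
  have hC := aux_nonneg σ r q K s t hσ hK hs ht
  generalize hL : (1 - RC) * lamC + sF = L
  have hu : 0 ≤ Real.exp (-L * t) * callPrice σ r q K s t := mul_nonneg (Real.exp_pos _).le hC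
  refine ⟨hu, ?_⟩
  rw [min_eq_right hu, max_eq_left hu]
  have he : HasDerivAt (fun τ => Real.exp (-L * τ)) (Real.exp (-L * t) * (-L * 1)) t :=
    ((hasDerivAt_id t).const_mul (-L)).exp
  have hθ := (he.mul (aux_theta σ r q K s t hσ hK hs ht)).deriv
  have hd (x : ℝ) (hx : 0 < x) :=
    ((aux_delta σ r q K x t hσ hK hx ht).const_mul (Real.exp (-L * t))).deriv
  have hg : deriv (fun x => deriv (fun y => Real.exp (-L * t) * callPrice σ r q K y t) x) s =
      Real.exp (-L * t) *
        (Real.exp (-q * t) * (stdNormalPDF (d1 σ r q s K t) * (1 / (s * (σ * √t))))) := by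
    rw [← ((aux_gamma σ r q K s t hσ hK hs ht).const_mul (Real.exp (-L * t))).deriv]
    apply Filter.EventuallyEq.deriv_eq
    filter_upwards [Ioi_mem_nhds hs] with x hx
    exact hd x hx
  have hθ2 : deriv (fun τ => Real.exp (-L * τ) * callPrice σ r q K s τ) t = _ := hθ
  rw [hθ2, hg, hd s hs]
  have hq := Real.sqrt_pos.2 ht
  unfold callPrice
  field_simp
  ring
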